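/- Let φ(z) = (az + b)/(cz + d) be a linear fractional map with ad − bc ≠ 0 that maps the open unit disc 𝔻 into itself. Set σ(z) = (conj(a)·z − conj(c)) / (−conj(b)·z + conj(d)), g(z) = (−conj(b)·z + conj(d))^{−1}, and h(z) = cz + d. Then σ maps 𝔻 into itself, g and h are bounded analytic functions on 𝔻, and on the Hardy space H² the adjoint of the composition operator C_φ satisfies C_φ* = M_g C_σ M_h*, where M_g and M_h denote the multiplication operators f ↦ g·f and f ↦ h·f. -/

import Mathlib

open Complex
open scoped ComplexInnerProductSpace

/-!
An operator on `H²` is determined by its action on the Szegő kernels `k_w(z) = (1 - w̄ z)⁻¹`. Since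
pairing with `k_z` is evaluation at `z`, adjoints act on them by `C_φ* k_w = k_{φ w}` and
`M_u* k_w = conj (u w) • k_w`. The adjoint formula is therefore the pointwise identity
`(1 - z conj (φ w))⁻¹ = g z (1 - σ z w̄)⁻¹ conj (h w)`, which is algebra.

That `σ` maps the disc into itself is a reflection argument: if `‖σ w̄‖ ≥ 1` with `‖w‖ < 1`, then
solving `σ w̄ = 1 / ζ̄` gives `w φ(ζ) = 1` for some `ζ` in the closed disc, although `‖φ ζ‖ ≤ 1`.
-/

section LinearFractional

open scoped ComplexConjugate

theorem inv_one_sub_mul_linearFractional {K : Type*} [Field K] {a b c d z w : K}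
    (hw : c * w + d ≠ 0) (hz : -b * z + d ≠ 0) :
    (1 - z * ((a * w + b) / (c * w + d)))⁻¹ =
      (-b * z + d)⁻¹ * (1 - (a * z - c) / (-b * z + d) * w)⁻¹ * (c * w + d) := by
  have clear_w : (1 - z * ((a * w + b) / (c * w + d))) * (c * w + d) =
      c * w + d - z * (a * w + b) := by
    rw [sub_mul, mul_assoc, div_mul_cancel₀ _ hw, one_mul]
  have clear_z : (1 - (a * z - c) / (-b * z + d) * w) * (-b * z + d) =
      c * w + d - z * (a * w + b) := by
    rw [sub_mul, mul_right_comm, div_mul_cancel₀ _ hz]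
    ring
  rw [eq_div_of_mul_eq hw clear_w, inv_div, ← mul_inv_rev, clear_z, div_eq_inv_mul]

theorem exists_norm_le_one_mul_eq {K : Type*} [NormedField K] {x y : K} (h : ‖y‖ ≤ ‖x‖) :
    ∃ ζ : K, ‖ζ‖ ≤ 1 ∧ x * ζ = y := by
  refine ⟨y / x, ?_, mul_div_cancel_of_imp' ?_⟩
  · rw [norm_div]
    exact div_le_one_of_le₀ h (norm_nonneg x)
  · rintro rfl
    simpa using h

theorem norm_mul_add_le {R : Type*} [SeminormedRing R] {c d z : R} (hz : ‖z‖ ≤ 1) :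
    ‖c * z + d‖ ≤ ‖c‖ + ‖d‖ :=
  norm_add_le_of_le
    ((norm_mul_le c z).trans (mul_le_of_le_one_right (norm_nonneg c) hz)) le_rfl

theorem norm_mul_add_inv_le {K : Type*} [NormedDivisionRing K] {b d z : K} (hbd : ‖b‖ < ‖d‖)
    (hz : ‖z‖ ≤ 1) : ‖(b * z + d)⁻¹‖ ≤ (‖d‖ - ‖b‖)⁻¹ := by
  rw [norm_inv]
  refine inv_anti₀ (sub_pos.2 hbd) ?_
  calc ‖d‖ - ‖b‖ ≤ ‖d‖ - ‖b * z‖ := by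
        rw [norm_mul]
        gcongr
        exact mul_le_of_le_one_right (norm_nonneg b) hz
    _ ≤ ‖d + b * z‖ := norm_sub_le_norm_add d (b * z)
    _ = ‖b * z + d‖ := by rw [add_comm]

theorem dense_setOf_mul_add_ne_zero {K : Type*} [NontriviallyNormedField K] {c d : K}
    (hcd : c ≠ 0 ∨ d ≠ 0) : Dense {z : K | c * z + d ≠ 0} := by
  refine (dense_compl_singleton (-d / c)).mono ?_
  intro z hz hpole
  apply hz
  have hc : c ≠ 0 := by
    rintro rfl
    simp_all
  rw [Set.mem_singleton_iff, eq_div_iff hc]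
  linear_combination hpole

variable {a b c d : ℂ}

/- Division by zero gives `0`, so `hφ` says nothing at a pole of `φ`. The cleared inequality extends
to the poles and to the boundary circle by density. -/
theorem norm_linearFractional_num_le_denom (hcd : c ≠ 0 ∨ d ≠ 0)
    (hφ : ∀ z : ℂ, ‖z‖ < 1 → ‖(a * z + b) / (c * z + d)‖ < 1) {z : ℂ} (hz : ‖z‖ ≤ 1) :
    ‖a * z + b‖ ≤ ‖c * z + d‖ := by
  have hclosed : IsClosed {w : ℂ | ‖a * w + b‖ ≤ ‖c * w + d‖} :=
    isClosed_le (by fun_prop) (by fun_prop)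
  have hle : Metric.ball (0 : ℂ) 1 ∩ {w | c * w + d ≠ 0} ⊆ {w | ‖a * w + b‖ ≤ ‖c * w + d‖} := by
    rintro w ⟨hw, hpole⟩
    have h := hφ w (mem_ball_zero_iff.1 hw)
    rw [norm_div, div_lt_one (norm_pos_iff.2 hpole)] at h
    exact h.le
  have hdense : Metric.closedBall (0 : ℂ) 1 ⊆
      closure (Metric.ball (0 : ℂ) 1 ∩ {w | c * w + d ≠ 0}) := by
    rw [← closure_ball _ one_ne_zero]
    exact closure_minimal
      ((dense_setOf_mul_add_ne_zero hcd).open_subset_closure_inter Metric.isOpen_ball)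
      isClosed_closure
  exact closure_minimal hle hclosed (hdense (mem_closedBall_zero_iff.2 hz))

variable (h_det : a * d - b * c ≠ 0)
  (hφ : ∀ z : ℂ, ‖z‖ < 1 → ‖(a * z + b) / (c * z + d)‖ < 1)
  {z : ℂ}

include h_det hφ

theorem norm_linearFractional_num_le_denom_of_det_ne_zero (hz : ‖z‖ ≤ 1) :
    ‖a * z + b‖ ≤ ‖c * z + d‖ := by
  refine norm_linearFractional_num_le_denom ?_ hφ hz
  by_contra! hcd
  simp [hcd.1, hcd.2] at h_det

theorem linearFractional_denom_ne_zero (hz : ‖z‖ ≤ 1) : c * z + d ≠ 0 := by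
  intro hpole
  have hnum : a * z + b = 0 := by
    simpa [hpole] using norm_linearFractional_num_le_denom_of_det_ne_zero h_det hφ hz
  exact h_det (by linear_combination a * hpole - c * hnum)

theorem norm_linearFractional_num_lt_denom (hz : ‖z‖ < 1) : ‖a * z + b‖ < ‖c * z + d‖ := by
  have h := hφ z hz
  rwa [norm_div, div_lt_one (norm_pos_iff.2 (linearFractional_denom_ne_zero h_det hφ hz.le))] at h

theorem norm_mul_sub_lt_norm_neg_mul_add (hz : ‖z‖ < 1) : ‖a * z - c‖ < ‖-b * z + d‖ := by
  by_contra! hle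
  obtain ⟨ζ, hζ, hmul⟩ := exists_norm_le_one_mul_eq hle
  have hreflect : z * (a * ζ + b) = c * ζ + d := by linear_combination hmul
  have hne : z * (a * ζ + b) ≠ 0 := hreflect ▸ linearFractional_denom_ne_zero h_det hφ hζ
  have hlt : ‖z * (a * ζ + b)‖ < ‖a * ζ + b‖ := by
    rw [norm_mul]
    exact mul_lt_of_lt_one_left (norm_pos_iff.2 (right_ne_zero_of_mul hne)) hz
  exact (hreflect ▸ norm_linearFractional_num_le_denom_of_det_ne_zero h_det hφ hζ).not_gt hlt

theorem norm_adjointLinearFractional_num_lt_denom (hz : ‖z‖ < 1) :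
    ‖conj a * z - conj c‖ < ‖-conj b * z + conj d‖ := by
  have h := norm_mul_sub_lt_norm_neg_mul_add h_det hφ (z := conj z) (by rwa [norm_conj])
  rw [← norm_conj (a * _ - c), ← norm_conj (-b * _ + d)] at h
  simpa only [map_sub, map_add, map_mul, map_neg, conj_conj] using h

theorem adjointLinearFractional_denom_ne_zero (hz : ‖z‖ < 1) : -conj b * z + conj d ≠ 0 :=
  norm_pos_iff.1 <|
    (norm_nonneg _).trans_lt (norm_adjointLinearFractional_num_lt_denom h_det hφ hz)

theorem norm_adjointLinearFractional_lt_one (hz : ‖z‖ < 1) :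
    ‖(conj a * z - conj c) / (-conj b * z + conj d)‖ < 1 := by
  rw [norm_div, div_lt_one (norm_pos_iff.2 (adjointLinearFractional_denom_ne_zero h_det hφ hz))]
  exact norm_adjointLinearFractional_num_lt_denom h_det hφ hz

theorem differentiableOn_adjointLinearFractional_denom_inv :
    DifferentiableOn ℂ (fun z : ℂ => (-conj b * z + conj d)⁻¹) (Metric.ball 0 1) :=
  DifferentiableOn.fun_inv (by fun_prop) fun _ hz =>
    adjointLinearFractional_denom_ne_zero h_det hφ (mem_ball_zero_iff.1 hz)

end LinearFractional

section SzegoKernel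

open scoped ComplexConjugate

theorem eq_of_inner_hilbertBasis_eq {ι 𝕜 E : Type*} [RCLike 𝕜] [NormedAddCommGroup E]
    [InnerProductSpace 𝕜 E] (e : HilbertBasis ι 𝕜 E) {x y : E}
    (h : ∀ i, inner 𝕜 (e i) x = inner 𝕜 (e i) y) : x = y := by
  refine e.repr.injective (lp.ext (funext fun i => ?_))
  rw [e.repr_apply_apply, e.repr_apply_apply, h]

theorem hasSum_pow_mul_iteratedDeriv_div_factorial {f : ℂ → ℂ} {r : ℝ} {z : ℂ}
    (hf : DifferentiableOn ℂ f (Metric.ball 0 r)) (hz : ‖z‖ < r) :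
    HasSum (fun p : ℕ => z ^ p * (iteratedDeriv p f 0 / (p.factorial : ℂ))) (f z) := by
  refine (hasSum_taylorSeries_on_ball hf (mem_ball_zero_iff.2 hz)).congr_fun fun p => ?_
  simp only [sub_zero, smul_eq_mul]
  ring

variable {H : Type*} [NormedAddCommGroup H] [InnerProductSpace ℂ H]

/-- The Szegő kernel `k_z = ∑ₖ z̄ᵏ eₖ`, the reproducing kernel at `z` of the Hardy space when `e k`
stands for the monomial of degree `k`: pairing with it evaluates a function at `z`. It is meaningful
only for `‖z‖ < 1`, since otherwise the series diverges and `∑'` returns `0`. -/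
noncomputable def szegoKernel (e : HilbertBasis ℕ ℂ H) (z : ℂ) : H :=
  ∑' k, conj z ^ k • e k

/-- `C` is the composition operator `f ↦ f ∘ φ` in the Hilbert basis `e k ↔ zᵏ`: the column of `C`
at `e k` consists of the Taylor coefficients at `0` of `φᵏ`. -/
def IsCompositionOperator (e : HilbertBasis ℕ ℂ H) (φ : ℂ → ℂ) (C : H →L[ℂ] H) : Prop :=
  ∀ k p : ℕ, ⟪e p, C (e k)⟫ = iteratedDeriv p (fun z => φ z ^ k) 0 / (p.factorial : ℂ)

/-- `M` is the multiplication operator `f ↦ u * f` in the Hilbert basis `e k ↔ zᵏ`: the column of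
`M` at `e k` consists of the Taylor coefficients at `0` of `u`, shifted down by `k`. -/
def IsMultiplicationOperator (e : HilbertBasis ℕ ℂ H) (u : ℂ → ℂ) (M : H →L[ℂ] H) : Prop :=
  ∀ k p : ℕ, ⟪e p, M (e k)⟫ =
    if k ≤ p then iteratedDeriv (p - k) u 0 / ((p - k).factorial : ℂ) else 0

variable [CompleteSpace H] (e : HilbertBasis ℕ ℂ H) {z w : ℂ}

theorem hasSum_szegoKernel (hz : ‖z‖ < 1) :
    HasSum (fun k => conj z ^ k • e k) (szegoKernel e z) := by
  refine Summable.hasSum (Summable.of_norm ?_)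
  simpa [norm_smul, e.orthonormal.1] using hz

theorem inner_basis_szegoKernel (hz : ‖z‖ < 1) (k : ℕ) :
    ⟪e k, szegoKernel e z⟫ = conj z ^ k := by
  have h := (hasSum_szegoKernel e hz).mapL (innerSL ℂ (e k))
  refine (h.unique (hasSum_single k fun j hj => ?_)).trans ?_
  · simp [e.orthonormal.2 hj.symm]
  · simp [e.orthonormal.1]

theorem inner_szegoKernel_basis (hz : ‖z‖ < 1) (k : ℕ) : ⟪szegoKernel e z, e k⟫ = z ^ k := by
  rw [← inner_conj_symm, inner_basis_szegoKernel e hz, map_pow, conj_conj]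

theorem hasSum_inner_szegoKernel (hz : ‖z‖ < 1) (x : H) :
    HasSum (fun k => z ^ k * ⟪e k, x⟫) ⟪szegoKernel e z, x⟫ := by
  simpa only [inner_szegoKernel_basis e hz] using e.hasSum_inner_mul_inner (szegoKernel e z) x

theorem inner_szegoKernel_szegoKernel (hz : ‖z‖ < 1) (hw : ‖w‖ < 1) :
    ⟪szegoKernel e z, szegoKernel e w⟫ = (1 - z * conj w)⁻¹ := by
  refine (hasSum_inner_szegoKernel e hz _).unique ?_
  simp only [inner_basis_szegoKernel e hw, ← mul_pow]
  refine hasSum_geometric_of_norm_lt_one ?_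
  rw [norm_mul, norm_conj]
  exact mul_lt_one_of_nonneg_of_lt_one_left (norm_nonneg z) hz hw.le

theorem hasFPowerSeriesAt_inner_szegoKernel (x : H) :
    HasFPowerSeriesAt (fun z => ⟪szegoKernel e z, x⟫)
      (FormalMultilinearSeries.ofScalars ℂ fun k => ⟪e k, x⟫) 0 := by
  rw [hasFPowerSeriesAt_iff']
  filter_upwards [Metric.ball_mem_nhds (0 : ℂ) one_pos] with z hz
  simpa only [sub_zero, smul_eq_mul, FormalMultilinearSeries.coeff_ofScalars] using
    hasSum_inner_szegoKernel e (mem_ball_zero_iff.1 hz) x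

theorem eq_of_inner_szegoKernel_eq {x y : H}
    (h : ∀ z : ℂ, ‖z‖ < 1 → ⟪szegoKernel e z, x⟫ = ⟪szegoKernel e z, y⟫) : x = y := by
  have heq : (fun z => ⟪szegoKernel e z, x⟫) =ᶠ[nhds 0] fun z => ⟪szegoKernel e z, y⟫ := by
    filter_upwards [Metric.ball_mem_nhds (0 : ℂ) one_pos] with z hz
    exact h z (mem_ball_zero_iff.1 hz)
  have hseries := (hasFPowerSeriesAt_inner_szegoKernel e x).eq_formalMultilinearSeries_of_eventually
    (hasFPowerSeriesAt_inner_szegoKernel e y) heq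
  exact eq_of_inner_hilbertBasis_eq e
    (congrFun (FormalMultilinearSeries.ofScalars_series_injective ℂ ℂ hseries))

theorem continuousLinearMap_eq_of_apply_szegoKernel_eq {F : Type*} [NormedAddCommGroup F]
    [InnerProductSpace ℂ F] [CompleteSpace F] {S T : H →L[ℂ] F}
    (h : ∀ w : ℂ, ‖w‖ < 1 → S (szegoKernel e w) = T (szegoKernel e w)) : S = T := by
  refine ContinuousLinearMap.adjoint.injective (ContinuousLinearMap.ext fun y => ?_)
  refine eq_of_inner_szegoKernel_eq e fun w hw => ?_
  rw [ContinuousLinearMap.adjoint_inner_right, ContinuousLinearMap.adjoint_inner_right, h w hw]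

variable {e}

theorem IsCompositionOperator.adjoint_apply_szegoKernel {φ : ℂ → ℂ} {C : H →L[ℂ] H}
    (hC : IsCompositionOperator e φ C) (hφd : DifferentiableOn ℂ φ (Metric.ball 0 1))
    (hz : ‖z‖ < 1) (hφz : ‖φ z‖ < 1) :
    ContinuousLinearMap.adjoint C (szegoKernel e z) = szegoKernel e (φ z) := by
  refine eq_of_inner_hilbertBasis_eq e fun k => ?_
  have heval : ⟪szegoKernel e z, C (e k)⟫ = φ z ^ k := by
    refine (hasSum_inner_szegoKernel e hz _).unique ?_
    simp only [hC k]
    exact hasSum_pow_mul_iteratedDeriv_div_factorial (hφd.pow k) hz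
  rw [ContinuousLinearMap.adjoint_inner_right, ← inner_conj_symm, heval, map_pow,
    inner_basis_szegoKernel e hφz]

theorem IsMultiplicationOperator.adjoint_apply_szegoKernel {u : ℂ → ℂ} {M : H →L[ℂ] H}
    (hM : IsMultiplicationOperator e u M) (hu : DifferentiableOn ℂ u (Metric.ball 0 1))
    (hz : ‖z‖ < 1) :
    ContinuousLinearMap.adjoint M (szegoKernel e z) = conj (u z) • szegoKernel e z := by
  refine eq_of_inner_hilbertBasis_eq e fun k => ?_
  have heval : ⟪szegoKernel e z, M (e k)⟫ = z ^ k * u z := by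
    refine (hasSum_inner_szegoKernel e hz _).unique ?_
    rw [← hasSum_nat_add_iff' k, Finset.sum_eq_zero, sub_zero]
    · refine ((hasSum_pow_mul_iteratedDeriv_div_factorial hu hz).mul_left (z ^ k)).congr_fun
        fun p => ?_
      rw [hM, if_pos (Nat.le_add_left k p), Nat.add_sub_cancel]
      ring
    · intro p hp
      rw [hM, if_neg (Finset.mem_range.1 hp).not_ge, mul_zero]
  rw [ContinuousLinearMap.adjoint_inner_right, ← inner_conj_symm, heval, inner_smul_right,
    inner_basis_szegoKernel e hz, map_mul, map_pow, mul_comm]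

theorem IsCompositionOperator.inner_szegoKernel_apply {φ : ℂ → ℂ} {C : H →L[ℂ] H}
    (hC : IsCompositionOperator e φ C) (hφd : DifferentiableOn ℂ φ (Metric.ball 0 1))
    (hz : ‖z‖ < 1) (hφz : ‖φ z‖ < 1) (x : H) :
    ⟪szegoKernel e z, C x⟫ = ⟪szegoKernel e (φ z), x⟫ := by
  rw [← ContinuousLinearMap.adjoint_inner_left, hC.adjoint_apply_szegoKernel hφd hz hφz]

theorem IsMultiplicationOperator.inner_szegoKernel_apply {u : ℂ → ℂ} {M : H →L[ℂ] H}
    (hM : IsMultiplicationOperator e u M) (hu : DifferentiableOn ℂ u (Metric.ball 0 1))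
    (hz : ‖z‖ < 1) (x : H) :
    ⟪szegoKernel e z, M x⟫ = u z * ⟪szegoKernel e z, x⟫ := by
  rw [← ContinuousLinearMap.adjoint_inner_left, hM.adjoint_apply_szegoKernel hu hz,
    inner_smul_left, conj_conj]

theorem adjoint_eq_mul_comp_adjoint_mul_of_kernel_identity {φ σ g h : ℂ → ℂ}
    {Cφ Cσ Mg Mh : H →L[ℂ] H}
    (hCφ : IsCompositionOperator e φ Cφ) (hCσ : IsCompositionOperator e σ Cσ)
    (hMg : IsMultiplicationOperator e g Mg) (hMh : IsMultiplicationOperator e h Mh)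
    (hφd : DifferentiableOn ℂ φ (Metric.ball 0 1)) (hσd : DifferentiableOn ℂ σ (Metric.ball 0 1))
    (hgd : DifferentiableOn ℂ g (Metric.ball 0 1)) (hhd : DifferentiableOn ℂ h (Metric.ball 0 1))
    (hφ : ∀ z : ℂ, ‖z‖ < 1 → ‖φ z‖ < 1) (hσ : ∀ z : ℂ, ‖z‖ < 1 → ‖σ z‖ < 1)
    (hkernel : ∀ z w : ℂ, ‖z‖ < 1 → ‖w‖ < 1 →
      (1 - z * conj (φ w))⁻¹ = g z * (1 - σ z * conj w)⁻¹ * conj (h w)) :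
    ContinuousLinearMap.adjoint Cφ = Mg ∘L (Cσ ∘L ContinuousLinearMap.adjoint Mh) := by
  refine continuousLinearMap_eq_of_apply_szegoKernel_eq e fun w hw => ?_
  refine eq_of_inner_szegoKernel_eq e fun z hz => ?_
  calc ⟪szegoKernel e z, ContinuousLinearMap.adjoint Cφ (szegoKernel e w)⟫
      = (1 - z * conj (φ w))⁻¹ := by
        rw [hCφ.adjoint_apply_szegoKernel hφd hw (hφ w hw),
          inner_szegoKernel_szegoKernel e hz (hφ w hw)]
    _ = g z * (1 - σ z * conj w)⁻¹ * conj (h w) := hkernel z w hz hw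
    _ = g z * ⟪szegoKernel e (σ z), conj (h w) • szegoKernel e w⟫ := by
        rw [inner_smul_right, inner_szegoKernel_szegoKernel e (hσ z hz) hw]
        ring
    _ = ⟪szegoKernel e z, Mg (Cσ (ContinuousLinearMap.adjoint Mh (szegoKernel e w)))⟫ := by
        rw [hMg.inner_szegoKernel_apply hgd hz, hCσ.inner_szegoKernel_apply hσd hz (hσ z hz),
          hMh.adjoint_apply_szegoKernel hhd hw]

theorem adjoint_compositionOperator_linearFractional {a b c d : ℂ} (h_det : a * d - b * c ≠ 0)
    (hφ : ∀ z : ℂ, ‖z‖ < 1 → ‖(a * z + b) / (c * z + d)‖ < 1) {Cφ Cσ Mg Mh : H →L[ℂ] H}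
    (hCφ : IsCompositionOperator e (fun z => (a * z + b) / (c * z + d)) Cφ)
    (hCσ : IsCompositionOperator e
      (fun z => (conj a * z - conj c) / (-conj b * z + conj d)) Cσ)
    (hMg : IsMultiplicationOperator e (fun z => (-conj b * z + conj d)⁻¹) Mg)
    (hMh : IsMultiplicationOperator e (fun z => c * z + d) Mh) :
    ContinuousLinearMap.adjoint Cφ = Mg ∘L (Cσ ∘L ContinuousLinearMap.adjoint Mh) := by
  have hφd : DifferentiableOn ℂ (fun z => (a * z + b) / (c * z + d)) (Metric.ball 0 1) :=
    DifferentiableOn.fun_div (by fun_prop) (by fun_prop) fun _ hz =>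
      linearFractional_denom_ne_zero h_det hφ (mem_ball_zero_iff.1 hz).le
  have hσd : DifferentiableOn ℂ (fun z => (conj a * z - conj c) / (-conj b * z + conj d))
      (Metric.ball 0 1) :=
    DifferentiableOn.fun_div (by fun_prop) (by fun_prop) fun _ hz =>
      adjointLinearFractional_denom_ne_zero h_det hφ (mem_ball_zero_iff.1 hz)
  refine adjoint_eq_mul_comp_adjoint_mul_of_kernel_identity hCφ hCσ hMg hMh hφd hσd
    (differentiableOn_adjointLinearFractional_denom_inv h_det hφ) (by fun_prop) hφ
    (fun _ hz => norm_adjointLinearFractional_lt_one h_det hφ hz) fun z w hz hw => ?_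
  have hw_denom := (map_ne_zero conj).2 (linearFractional_denom_ne_zero h_det hφ hw.le)
  simp only [map_div₀, map_add, map_mul] at hw_denom ⊢
  exact inv_one_sub_mul_linearFractional hw_denom
    (adjointLinearFractional_denom_ne_zero h_det hφ hz)

end SzegoKernel

/-- **Cowen's adjoint formula on `H²`.**
Let `φ(z) = (az+b)/(cz+d)` (`ad - bc ≠ 0`) map the open unit disc into itself, and set
`σ(z) = (ā z - c̄)/(-b̄ z + d̄)`, `g(z) = (-b̄ z + d̄)⁻¹`, `h(z) = cz + d`.  The Hardy space
`H²` is modelled as a Hilbert space `H` with Hilbert basis `e k ↔ z^k`; the composition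
operators `Cφ, Cσ` and the multiplication operators `Mg, Mh` are characterized through
their matrix entries via Taylor coefficients at `0`.  Then `σ` maps the disc into itself,
`g` and `h` are bounded analytic on the disc, and `Cφ* = Mg ∘ Cσ ∘ Mh*`. -/
theorem stmt_14 (a b c d : ℂ) (h_det : a * d - b * c ≠ 0)
    (hφ : ∀ z : ℂ, ‖z‖ < 1 → ‖(a * z + b) / (c * z + d)‖ < 1)
    (H : Type) [NormedAddCommGroup H] [InnerProductSpace ℂ H] [CompleteSpace H]
    (e : HilbertBasis ℕ ℂ H)
    (Cφ Cσ Mg Mh : H →L[ℂ] H)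
    (hCφ : ∀ k p : ℕ, ⟪(e p : H), Cφ (e k)⟫ =
      iteratedDeriv p (fun z : ℂ => ((a * z + b) / (c * z + d)) ^ k) 0 / (p.factorial : ℂ))
    (hCσ : ∀ k p : ℕ, ⟪(e p : H), Cσ (e k)⟫ =
      iteratedDeriv p
        (fun z : ℂ => (((starRingEnd ℂ) a * z - (starRingEnd ℂ) c) /
          (-(starRingEnd ℂ) b * z + (starRingEnd ℂ) d)) ^ k) 0 / (p.factorial : ℂ))
    (hMg : ∀ k p : ℕ, ⟪(e p : H), Mg (e k)⟫ =
      if k ≤ p then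
        iteratedDeriv (p - k)
          (fun z : ℂ => (-(starRingEnd ℂ) b * z + (starRingEnd ℂ) d)⁻¹) 0 /
          ((p - k).factorial : ℂ)
      else 0)
    (hMh : ∀ k p : ℕ, ⟪(e p : H), Mh (e k)⟫ =
      if k ≤ p then
        iteratedDeriv (p - k) (fun z : ℂ => c * z + d) 0 / ((p - k).factorial : ℂ)
      else 0) :
    (∀ z : ℂ, ‖z‖ < 1 →
      ‖((starRingEnd ℂ) a * z - (starRingEnd ℂ) c) /
          (-(starRingEnd ℂ) b * z + (starRingEnd ℂ) d)‖ < 1) ∧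
    DifferentiableOn ℂ
      (fun z : ℂ => (-(starRingEnd ℂ) b * z + (starRingEnd ℂ) d)⁻¹)
      (Metric.ball (0 : ℂ) 1) ∧
    (∃ M : ℝ, ∀ z : ℂ, ‖z‖ < 1 →
      ‖(-(starRingEnd ℂ) b * z + (starRingEnd ℂ) d)⁻¹‖ ≤ M) ∧
    DifferentiableOn ℂ (fun z : ℂ => c * z + d) (Metric.ball (0 : ℂ) 1) ∧
    (∃ M : ℝ, ∀ z : ℂ, ‖z‖ < 1 → ‖c * z + d‖ ≤ M) ∧
    ContinuousLinearMap.adjoint Cφ = Mg ∘L (Cσ ∘L ContinuousLinearMap.adjoint Mh) := by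
  have hbd : ‖-(starRingEnd ℂ) b‖ < ‖(starRingEnd ℂ) d‖ := by
    simpa using norm_linearFractional_num_lt_denom h_det hφ (z := 0) (by simp)
  exact ⟨fun z hz => norm_adjointLinearFractional_lt_one h_det hφ hz,
    differentiableOn_adjointLinearFractional_denom_inv h_det hφ,
    ⟨_, fun z hz => norm_mul_add_inv_le hbd hz.le⟩,
    by fun_prop,
    ⟨_, fun z hz => norm_mul_add_le hz.le⟩,
    adjoint_compositionOperator_linearFractional h_det hφ hCφ hCσ hMg hMh⟩
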